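/- arXiv:2603.03863 — 7 statements merged into one kernel-verified Lean document; each statement's English description precedes it below -/
import Mathlib

section
/- Let Γ be a group generated by a finite symmetric subset S containing the identity, and let μ > 0. Then the set 𝓑(S;μ) = {F ∈ 𝓕(Γ) : F(s) ≤ cosh μ for all s ∈ S} is a compact subset of ℝ^Γ for the product topology, and moreover for every function of hyperbolic type F on Γ there exists t ∈ (0,1] such that the pointwise power F^t belongs to 𝓑(S;μ). -/
/-- A kernel of hyperbolic type on a set `X`: symmetric, nonnegative, with diagonal `1`,
satisfying the hyperbolic Cauchy–Schwarz inequalities. -/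
def IsHypKernel {X : Type*} (K : X → X → ℝ) : Prop :=
  (∀ x y, K x y = K y x) ∧ (∀ x y, 0 ≤ K x y) ∧ (∀ x, K x x = 1) ∧
  ∀ (n : ℕ) (x₀ : X) (x : Fin n → X) (lam : Fin n → ℝ),
    (∑ i, ∑ j, lam i * lam j * K (x i) (x j)) ≤ (∑ k, lam k * K x₀ (x k)) ^ 2

/-- A function of hyperbolic type on a group `Γ`. -/
def IsHypType {Γ : Type*} [Group Γ] (F : Γ → ℝ) : Prop :=
  IsHypKernel (fun α β : Γ => F (α⁻¹ * β))

/-!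
For a kernel `K` of hyperbolic type and a base point `x₀`, the hyperbolic Cauchy–Schwarz
inequalities say that `K x₀ x * K x₀ y - K x y` is positive semidefinite. Scaling it to
`N x y = 1 - K x y / (K x₀ x * K x₀ y)`, the inequality for two points gives `|N| < 1`. For
`t ∈ [0, 1]` the function `1 - (1 - z) ^ t` has nonnegative Taylor coefficients, so by the Schur
product theorem it maps `N` to a positive semidefinite kernel; scaling back, `K ^ t` is again of
hyperbolic type. Since `b ^ t → 1` as `t → 0`, small powers of `F` satisfy `F ^ t ≤ cosh μ` on any
set where `F` is bounded.

The inequality for two points also gives `F (g * h) < 2 * (F g * F h)`. Hence a bound for `F` on a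
generating set bounds `F` at every element, and compactness is Tychonoff's theorem together with
the fact that the defining conditions are closed.
-/

open Filter Set Topology

section PosSemidef

variable {X R : Type*}

lemma posSemidef_iff_forall_fin [Ring R] [PartialOrder R] [StarRing R] {A : Matrix X X R} :
    A.PosSemidef ↔ A.IsHermitian ∧ ∀ (n : ℕ) (x : Fin n → X) (v : Fin n → R),
      0 ≤ ∑ i, ∑ j, star (v i) * A (x i) (x j) * v j := by
  refine ⟨fun hA => ⟨hA.isHermitian, fun n x v => ?_⟩, fun ⟨hA, h⟩ => ⟨hA, fun v => ?_⟩⟩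
  · simpa [dotProduct, Matrix.mulVec, Finset.mul_sum, mul_assoc] using
      (hA.submatrix x).dotProduct_mulVec_nonneg v
  · let e := v.support.equivFin.symm
    simpa only [Finsupp.sum, ← Finset.sum_coe_sort v.support, ← e.sum_comp] using
      h _ (fun i => e i) fun i => v (e i)

lemma posSemidef_star_mul_mul [Ring R] [PartialOrder R] [StarRing R] {A : Matrix X X R}
    (hA : A.PosSemidef) (f : X → R) :
    (Matrix.of fun x y => star (f x) * A x y * f y).PosSemidef := by
  refine posSemidef_iff_forall_fin.2 ⟨?_, fun n x v => ?_⟩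
  · ext x y
    simp [mul_assoc, hA.isHermitian.apply]
  · simpa [mul_assoc] using (posSemidef_iff_forall_fin.1 hA).2 n x fun i => f (x i) * v i

lemma isClosed_setOf_posSemidef [Ring R] [PartialOrder R] [StarRing R] [TopologicalSpace R]
    [IsTopologicalSemiring R] [ContinuousStar R] [OrderClosedTopology R] :
    IsClosed {A : Matrix X X R | A.PosSemidef} := by
  simp only [Matrix.PosSemidef, Matrix.IsHermitian, Finsupp.sum, Set.ofPred_and, Set.ofPred_forall]
  exact (isClosed_eq (by fun_prop) (by fun_prop)).inter <|
    isClosed_iInter fun v => isClosed_le (by fun_prop) (by fun_prop)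

lemma posSemidef_of_hasSum {ι : Type*} [Ring R] [PartialOrder R] [StarRing R] [TopologicalSpace R]
    [IsTopologicalSemiring R] [ContinuousStar R] [OrderClosedTopology R] [AddLeftMono R]
    {A : ι → Matrix X X R} {B : Matrix X X R} (hA : ∀ i, (A i).PosSemidef) (h : HasSum A B) :
    B.PosSemidef :=
  isClosed_setOf_posSemidef.mem_of_tendsto h <| .of_forall fun s =>
    Matrix.posSemidef_sum s fun i _ => hA i

open scoped ComplexOrder in
lemma posSemidef_map_pow_succ {𝕜 : Type*} [RCLike 𝕜] {A : Matrix X X 𝕜} (hA : A.PosSemidef)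
    (k : ℕ) : (A.map (· ^ (k + 1))).PosSemidef := by
  induction k with
  | zero => simpa using hA
  | succ k ih =>
    convert ih.hadamard hA using 1
    ext x y
    simp [pow_succ]

end PosSemidef

lemma succ_nsmul_choose_succ {R : Type*} [Ring R] [BinomialRing R] (r : R) (k : ℕ) :
    (k + 1) • Ring.choose r (k + 1) = Ring.choose r k * (r - k) := by
  simpa using Ring.choose_smul_choose r k.le_succ

lemma neg_one_pow_mul_choose_succ_nonneg {t : ℝ} (ht : t ∈ Icc 0 1) (k : ℕ) :
    0 ≤ (-1) ^ k * Ring.choose t (k + 1) := by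
  induction k with
  | zero => simpa using ht.1
  | succ k ih =>
    have hrec := succ_nsmul_choose_succ t (k + 1)
    push_cast [nsmul_eq_mul] at hrec
    have hstep : ((k : ℝ) + 1 + 1) * ((-1) ^ (k + 1) * Ring.choose t (k + 1 + 1)) =
        (k + 1 - t) * ((-1) ^ k * Ring.choose t (k + 1)) := by
      linear_combination (-1) ^ (k + 1) * hrec
    have hfactor : 0 ≤ k + 1 - t := by linarith [ht.2, k.cast_nonneg (α := ℝ)]
    exact nonneg_of_mul_nonneg_right (hstep ▸ mul_nonneg hfactor ih) (by positivity)

lemma hasSum_one_sub_one_sub_rpow (t : ℝ) {z : ℝ} (hz : |z| < 1) :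
    HasSum (fun k : ℕ => (-1) ^ k * Ring.choose t (k + 1) * z ^ (k + 1)) (1 - (1 - z) ^ t) := by
  have hsum : HasSum (fun k : ℕ => Ring.choose t k * (-z) ^ k) ((1 - z) ^ t) := by
    have hball : -z ∈ Metric.eball 0 1 := by simpa [enorm_eq_nnnorm, ← NNReal.coe_lt_coe] using hz
    simpa [-FormalMultilinearSeries.apply_eq_prod_smul_coeff, sub_eq_add_neg] using
      (Real.one_add_rpow_hasFPowerSeriesOnBall_zero (a := t)).hasSum hball
  have := ((hasSum_nat_add_iff' 1).2 hsum).neg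
  simpa [neg_pow z, pow_succ, mul_comm, mul_left_comm, mul_assoc] using this

lemma posSemidef_one_sub_one_sub_rpow {X : Type*} {A : Matrix X X ℝ} (hA : A.PosSemidef)
    (hlt : ∀ x y, |A x y| < 1) {t : ℝ} (ht : t ∈ Icc 0 1) :
    (Matrix.of fun x y => 1 - (1 - A x y) ^ t).PosSemidef := by
  have hterm (k : ℕ) : (((-1) ^ k * Ring.choose t (k + 1)) • A.map (· ^ (k + 1))).PosSemidef :=
    (posSemidef_map_pow_succ hA k).smul (neg_one_pow_mul_choose_succ_nonneg ht k)
  refine posSemidef_of_hasSum hterm ?_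
  exact Pi.hasSum.2 fun x => Pi.hasSum.2 fun y => hasSum_one_sub_one_sub_rpow t (hlt x y)

/-- The Gram kernel of `K` based at `x₀`, as a matrix indexed by the points: a symmetric
nonnegative `K` with diagonal `1` is of hyperbolic type iff all of these are positive semidefinite.
For `K = cosh d` on the hyperboloid, the entry at `x`, `y` is the inner product of the orthogonal
projections of `x` and `y` to the tangent space at `x₀`. -/
def basedGram {X : Type*} (K : X → X → ℝ) (x₀ : X) : Matrix X X ℝ :=
  Matrix.of fun x y => K x₀ x * K x₀ y - K x y

lemma sum_basedGram {X : Type*} (K : X → X → ℝ) (x₀ : X) {n : ℕ} (x : Fin n → X) (v : Fin n → ℝ) :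
    ∑ i, ∑ j, star (v i) * basedGram K x₀ (x i) (x j) * v j =
      (∑ k, v k * K x₀ (x k)) ^ 2 - ∑ i, ∑ j, v i * v j * K (x i) (x j) := by
  simp only [sq, Finset.sum_mul_sum, ← Finset.sum_sub_distrib, basedGram, Matrix.of_apply,
    star_trivial]
  exact Finset.sum_congr rfl fun i _ => Finset.sum_congr rfl fun j _ => by ring

namespace IsHypKernel

variable {X : Type*} {K : X → X → ℝ}

lemma symm (hK : IsHypKernel K) (x y : X) : K x y = K y x := hK.1 x y

lemma nonneg (hK : IsHypKernel K) (x y : X) : 0 ≤ K x y := hK.2.1 x y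

lemma apply_self (hK : IsHypKernel K) (x : X) : K x x = 1 := hK.2.2.1 x

lemma sum_le (hK : IsHypKernel K) {n : ℕ} (x₀ : X) (x : Fin n → X) (v : Fin n → ℝ) :
    ∑ i, ∑ j, v i * v j * K (x i) (x j) ≤ (∑ k, v k * K x₀ (x k)) ^ 2 :=
  hK.2.2.2 n x₀ x v

lemma posSemidef_basedGram (hK : IsHypKernel K) (x₀ : X) : (basedGram K x₀).PosSemidef := by
  refine posSemidef_iff_forall_fin.2 ⟨?_, fun n x v => ?_⟩
  · ext x y
    simp [basedGram, hK.symm y x, mul_comm]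
  · rw [sum_basedGram]
    exact sub_nonneg.2 (hK.sum_le x₀ x v)

lemma of_posSemidef_basedGram (hsymm : ∀ x y, K x y = K y x) (hnonneg : ∀ x y, 0 ≤ K x y)
    (hdiag : ∀ x, K x x = 1) (hpos : ∀ x₀, (basedGram K x₀).PosSemidef) : IsHypKernel K := by
  refine ⟨hsymm, hnonneg, hdiag, fun n x₀ x v => sub_nonneg.1 ?_⟩
  rw [← sum_basedGram]
  exact (posSemidef_iff_forall_fin.1 (hpos x₀)).2 n x v

lemma one_le (hK : IsHypKernel K) (x y : X) : 1 ≤ K x y := by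
  have hsq : 1 ≤ K x y ^ 2 := by simpa [hK.apply_self] using hK.sum_le x ![y] ![1]
  exact (one_le_sq_iff₀ (hK.nonneg x y)).1 hsq

lemma pos (hK : IsHypKernel K) (x y : X) : 0 < K x y := one_pos.trans_le (hK.one_le x y)

lemma lt_two_mul (hK : IsHypKernel K) (x₀ x y : X) : K x y < 2 * (K x₀ x * K x₀ y) := by
  have hx := hK.pos x₀ x
  have hy := hK.pos x₀ y
  have two_point :
      K x₀ y ^ 2 + K x₀ x ^ 2 + 2 * (K x₀ x * K x₀ y) * K x y ≤ (2 * (K x₀ x * K x₀ y)) ^ 2 := by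
    have := hK.sum_le x₀ ![x, y] ![K x₀ y, K x₀ x]
    simp only [Fin.sum_univ_two, Matrix.cons_val_zero, Matrix.cons_val_one, hK.apply_self,
      hK.symm y x] at this
    linarith
  have hxy : 0 < 2 * (K x₀ x * K x₀ y) := by positivity
  refine lt_of_mul_lt_mul_left ?_ hxy.le
  linarith [pow_pos hx 2, pow_pos hy 2]

lemma abs_basedGram_lt (hK : IsHypKernel K) (x₀ x y : X) :
    |basedGram K x₀ x y| < K x₀ x * K x₀ y := by
  simp only [basedGram, Matrix.of_apply, abs_lt]
  constructor <;> linarith [hK.lt_two_mul x₀ x y, hK.pos x y]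

lemma basedGram_rpow (hK : IsHypKernel K) (t : ℝ) (x₀ x y : X) :
    basedGram (fun x y => K x y ^ t) x₀ x y = K x₀ x ^ t *
      (1 - (1 - (K x₀ x)⁻¹ * basedGram K x₀ x y * (K x₀ y)⁻¹) ^ t) * K x₀ y ^ t := by
  have hx := hK.pos x₀ x
  have hy := hK.pos x₀ y
  have hratio : 1 - (K x₀ x)⁻¹ * basedGram K x₀ x y * (K x₀ y)⁻¹ = K x y / (K x₀ x * K x₀ y) := by
    simp only [basedGram, Matrix.of_apply]
    field_simp
    ring
  rw [hratio, Real.div_rpow (hK.nonneg x y) (by positivity), Real.mul_rpow hx.le hy.le]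
  simp only [basedGram, Matrix.of_apply]
  field_simp

theorem rpow (hK : IsHypKernel K) {t : ℝ} (ht : t ∈ Icc 0 1) :
    IsHypKernel fun x y => K x y ^ t := by
  refine of_posSemidef_basedGram (fun x y => by rw [hK.symm])
    (fun x y => Real.rpow_nonneg (hK.nonneg x y) t) (fun x => by simp [hK.apply_self]) fun x₀ => ?_
  have hscaled := posSemidef_star_mul_mul (hK.posSemidef_basedGram x₀) fun x => (K x₀ x)⁻¹
  have hlt (x y : X) : |(K x₀ x)⁻¹ * basedGram K x₀ x y * (K x₀ y)⁻¹| < 1 := by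
    rw [abs_mul, abs_mul, abs_inv, abs_inv, abs_of_pos (hK.pos x₀ x), abs_of_pos (hK.pos x₀ y),
      mul_inv_lt_iff₀ (hK.pos x₀ y), one_mul, inv_mul_lt_iff₀ (hK.pos x₀ x)]
    exact hK.abs_basedGram_lt x₀ x y
  convert posSemidef_star_mul_mul (posSemidef_one_sub_one_sub_rpow hscaled hlt ht)
    fun x => K x₀ x ^ t using 1
  ext x y
  exact hK.basedGram_rpow t x₀ x y

lemma isClosed_setOf : IsClosed {K : X → X → ℝ | IsHypKernel K} := by
  simp only [IsHypKernel, Set.ofPred_and, Set.ofPred_forall]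
  refine .inter ?_ (.inter ?_ (.inter ?_ ?_))
  · exact isClosed_iInter fun x => isClosed_iInter fun y => isClosed_eq (by fun_prop) (by fun_prop)
  · exact isClosed_iInter fun x => isClosed_iInter fun y => isClosed_le (by fun_prop) (by fun_prop)
  · exact isClosed_iInter fun x => isClosed_eq (by fun_prop) (by fun_prop)
  · exact isClosed_iInter fun n => isClosed_iInter fun x₀ => isClosed_iInter fun x =>
      isClosed_iInter fun v => isClosed_le (by fun_prop) (by fun_prop)

end IsHypKernel

lemma eventually_rpow_lt_nhds_zero {b c : ℝ} (hb : b ≠ 0) (hc : 1 < c) :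
    ∀ᶠ t in 𝓝 (0 : ℝ), b ^ t < c := by
  have hlim : Tendsto (fun t : ℝ => b ^ t) (𝓝 0) (𝓝 1) := by
    simpa using (Real.continuousAt_const_rpow hb (b := 0)).tendsto
  exact hlim.eventually_lt_const hc

namespace IsHypType

variable {Γ : Type*} [Group Γ] {F : Γ → ℝ}

lemma apply_one (hF : IsHypType F) : F 1 = 1 := by
  simpa using IsHypKernel.apply_self hF 1

lemma apply_inv (hF : IsHypType F) (g : Γ) : F g⁻¹ = F g := by
  simpa using IsHypKernel.symm hF g 1

lemma one_le (hF : IsHypType F) (g : Γ) : 1 ≤ F g := by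
  simpa using IsHypKernel.one_le hF 1 g

lemma apply_mul_lt (hF : IsHypType F) (g h : Γ) : F (g * h) < 2 * (F g * F h) := by
  simpa [hF.apply_inv] using IsHypKernel.lt_two_mul hF 1 g⁻¹ h

theorem rpow (hF : IsHypType F) {t : ℝ} (ht : t ∈ Icc 0 1) : IsHypType fun γ => F γ ^ t :=
  IsHypKernel.rpow hF ht

theorem exists_rpow_le (hF : IsHypType F) {S : Set Γ} (hS : BddAbove (F '' S)) {c : ℝ}
    (hc : 1 < c) : ∃ t ∈ Ioc (0 : ℝ) 1, ∀ s ∈ S, F s ^ t ≤ c := by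
  obtain ⟨b, hb⟩ := hS
  have hb' : max b 1 ≠ 0 := (one_pos.trans_le (le_max_right b 1)).ne'
  have hsmall : ∀ᶠ t in 𝓝[>] (0 : ℝ), max b 1 ^ t < c :=
    (eventually_rpow_lt_nhds_zero hb' hc).filter_mono nhdsWithin_le_nhds
  obtain ⟨t, hlt, ht⟩ := (hsmall.and (Ioc_mem_nhdsGT one_pos)).exists
  refine ⟨t, ht, fun s hs => le_trans ?_ hlt.le⟩
  have hFs : F s ≤ max b 1 := (hb (mem_image_of_mem F hs)).trans (le_max_left b 1)
  exact Real.rpow_le_rpow (zero_le_one.trans (hF.one_le s)) hFs ht.1.le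

lemma isClosed_setOf : IsClosed {F : Γ → ℝ | IsHypType F} :=
  IsHypKernel.isClosed_setOf.preimage
    (f := fun (F : Γ → ℝ) α β => F (α⁻¹ * β)) (by fun_prop)

lemma exists_forall_apply_le {S : Set Γ} (hS : Subgroup.closure S = ⊤) (c : Γ → ℝ) (γ : Γ) :
    ∃ C, ∀ F : Γ → ℝ, IsHypType F → (∀ s ∈ S, F s ≤ c s) → F γ ≤ C := by
  induction hS ▸ Subgroup.mem_top γ using Subgroup.closure_induction with
  | mem s hs => exact ⟨c s, fun F _ h => h s hs⟩
  | one => exact ⟨1, fun F hF _ => hF.apply_one.le⟩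
  | inv g _ ih => simpa +contextual only [apply_inv] using ih
  | mul g h _ _ ihg ihh =>
    obtain ⟨A, hA⟩ := ihg
    obtain ⟨B, hB⟩ := ihh
    refine ⟨2 * (A * B), fun F hF hc => (hF.apply_mul_lt g h).le.trans ?_⟩
    have hFg : F g ≤ A := hA F hF hc
    have hFh : F h ≤ B := hB F hF hc
    have hA₀ : 0 ≤ A := zero_le_one.trans ((hF.one_le g).trans hFg)
    have hFh₀ : 0 ≤ F h := zero_le_one.trans (hF.one_le h)
    gcongr

theorem isCompact_setOf_le {S : Set Γ} (hS : Subgroup.closure S = ⊤) (c : Γ → ℝ) :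
    IsCompact {F : Γ → ℝ | IsHypType F ∧ ∀ s ∈ S, F s ≤ c s} := by
  choose C hC using exists_forall_apply_le hS c
  refine (isCompact_univ_pi fun γ => isCompact_Icc (a := 1) (b := C γ)).of_isClosed_subset ?_ ?_
  · simp only [Set.ofPred_and, Set.ofPred_forall]
    exact isClosed_setOf.inter <| isClosed_iInter fun s => isClosed_iInter fun _ =>
      isClosed_le (by fun_prop) (by fun_prop)
  · exact fun F hF γ _ => ⟨hF.1.one_le γ, hC γ F hF.1 hF.2⟩

end IsHypType

theorem isCompact_ball_and_power_mem_general {Γ : Type*} [Group Γ] {S : Set Γ}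
    (hSgen : Subgroup.closure S = ⊤) {μ : ℝ} (hμ : 0 < μ) :
    IsCompact {F : Γ → ℝ | IsHypType F ∧ ∀ s ∈ S, F s ≤ Real.cosh μ} ∧
    ∀ F : Γ → ℝ, IsHypType F → BddAbove (F '' S) → ∃ t : ℝ, t ∈ Ioc (0 : ℝ) 1 ∧
      (fun γ : Γ => F γ ^ t) ∈ {F : Γ → ℝ | IsHypType F ∧ ∀ s ∈ S, F s ≤ Real.cosh μ} := by
  refine ⟨IsHypType.isCompact_setOf_le hSgen fun _ => Real.cosh μ, fun F hF hbdd => ?_⟩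
  obtain ⟨t, ht, hle⟩ := hF.exists_rpow_le hbdd (Real.one_lt_cosh.2 hμ.ne')
  exact ⟨t, ht, hF.rpow (Ioc_subset_Icc_self ht), hle⟩

/-- Let `Γ` be generated by a finite symmetric set `S` containing `1`, and `μ > 0`.  Then
`𝓑(S;μ) = {F ∈ 𝓕(Γ) : ∀ s ∈ S, F s ≤ cosh μ}` is compact in `ℝ^Γ` (product topology),
and every function of hyperbolic type `F` has a power `F^t`, `t ∈ (0,1]`, lying in `𝓑(S;μ)`. -/
theorem isCompact_ball_and_power_mem {Γ : Type*} [Group Γ] (S : Finset Γ)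
    (hSsym : ∀ s ∈ S, s⁻¹ ∈ S) (hSone : (1 : Γ) ∈ S)
    (hSgen : Subgroup.closure (S : Set Γ) = ⊤) (μ : ℝ) (hμ : 0 < μ) :
    IsCompact {F : Γ → ℝ | IsHypType F ∧ ∀ s ∈ S, F s ≤ Real.cosh μ} ∧
    ∀ F : Γ → ℝ, IsHypType F → ∃ t : ℝ, t ∈ Set.Ioc (0 : ℝ) 1 ∧
      (fun γ : Γ => F γ ^ t) ∈ {F : Γ → ℝ | IsHypType F ∧ ∀ s ∈ S, F s ≤ Real.cosh μ} :=
  (isCompact_ball_and_power_mem_general hSgen hμ).imp_right fun h F hF =>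
    h F hF (S.finite_toSet.image F).bddAbove
end

section
/- Let K be a kernel of hyperbolic type on a set X. Then K(x,y) ≥ 1 for all x,y ∈ X, and the function ρ(x,y) = arcosh(K(x,y)) is a pseudometric on X: ρ(x,x) = 0, ρ(x,y) = ρ(y,x), and ρ(x,z) ≤ ρ(x,y) + ρ(y,z) for all x,y,z ∈ X. -/
/-- The inverse hyperbolic cosine on `[1, ∞)`. -/
noncomputable def arcosh (x : ℝ) : ℝ := Real.log (x + Real.sqrt (x ^ 2 - 1))

/-!
Fix a base point `y`. The hyperbolic Cauchy–Schwarz inequality for the points `x`, `z` says that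
`(s, t) ↦ (s K(y,x) + t K(y,z))² - s² - 2 s t K(x,z) - t²` is a nonnegative quadratic form, so its
discriminant is nonpositive. Solving for `K(x,z)` and writing `K(x,y) = cosh α`, `K(y,z) = cosh β`
gives `K(x,z) ≤ cosh α cosh β + sinh α sinh β = cosh (α + β)`. Only two points besides the base
point ever occur.
-/

theorem arcosh_eq_real_arcosh : arcosh = Real.arcosh := rfl

theorem cosh_arcosh_add_arcosh {a b : ℝ} (ha : 1 ≤ a) (hb : 1 ≤ b) :
    Real.cosh (arcosh a + arcosh b) = a * b + √(a ^ 2 - 1) * √(b ^ 2 - 1) := by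
  rw [arcosh_eq_real_arcosh, Real.cosh_add, Real.cosh_arcosh ha, Real.cosh_arcosh hb,
    Real.sinh_arcosh ha, Real.sinh_arcosh hb]

theorem arcosh_le_iff_le_cosh {c r : ℝ} (hc : 0 < c) (hr : 0 ≤ r) :
    arcosh c ≤ r ↔ c ≤ Real.cosh r := by
  rw [← Real.arcosh_le_arcosh hc (Real.cosh_pos r), Real.arcosh_cosh hr, arcosh_eq_real_arcosh]

theorem arcosh_le_arcosh_add_arcosh {a b c : ℝ} (ha : 1 ≤ a) (hb : 1 ≤ b) (hc : 0 < c)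
    (h : (c - a * b) ^ 2 ≤ (a ^ 2 - 1) * (b ^ 2 - 1)) :
    arcosh c ≤ arcosh a + arcosh b := by
  have hsum : 0 ≤ arcosh a + arcosh b :=
    add_nonneg (Real.arcosh_nonneg ha) (Real.arcosh_nonneg hb)
  rw [arcosh_le_iff_le_cosh hc hsum, cosh_arcosh_add_arcosh ha hb, ← sub_le_iff_le_add',
    ← Real.sqrt_mul (sub_nonneg.2 (one_le_pow₀ ha))]
  exact Real.le_sqrt_of_sq_le h

/-- The hyperbolic Cauchy–Schwarz inequalities for `n` points and a base point. The points may
coincide, so the condition becomes stronger as `n` grows. -/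
def HypCauchySchwarz {X : Type*} (n : ℕ) (K : X → X → ℝ) : Prop :=
  ∀ (x₀ : X) (x : Fin n → X) (lam : Fin n → ℝ),
    ∑ i, ∑ j, lam i * lam j * K (x i) (x j) ≤ (∑ k, lam k * K x₀ (x k)) ^ 2

namespace HypCauchySchwarz

variable {X : Type*} {K : X → X → ℝ}

theorem one_le (h : HypCauchySchwarz 2 K) (hnonneg : ∀ x y, 0 ≤ K x y) (hdiag : ∀ x, K x x = 1)
    (x y : X) : 1 ≤ K x y := by
  have hsq : 1 ≤ K x y ^ 2 := by
    simpa [Fin.sum_univ_two, hdiag] using h x ![y, y] ![1, 0]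
  exact (one_le_sq_iff₀ (hnonneg x y)).1 hsq

theorem sq_sub_mul_le (h : HypCauchySchwarz 2 K) (hsymm : ∀ x y, K x y = K y x)
    (hdiag : ∀ x, K x x = 1) (x y z : X) :
    (K x z - K x y * K y z) ^ 2 ≤ (K x y ^ 2 - 1) * (K y z ^ 2 - 1) := by
  have hquad (t : ℝ) : 0 ≤ (K x y ^ 2 - 1) * (t * t) +
      2 * (K x y * K y z - K x z) * t + (K y z ^ 2 - 1) := by
    have hxz := h y ![x, z] ![t, 1]
    simp only [Fin.sum_univ_two, Matrix.cons_val_zero, Matrix.cons_val_one, hdiag,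
      hsymm z x, hsymm y x] at hxz
    linarith
  have hdiscrim := discrim_le_zero hquad
  rw [discrim] at hdiscrim
  linarith

end HypCauchySchwarz

theorem arcosh_kernel_pseudometric_general {X : Type*} (K : X → X → ℝ)
    (hsymm : ∀ x y, K x y = K y x) (hnonneg : ∀ x y, 0 ≤ K x y) (hdiag : ∀ x, K x x = 1)
    (hcs : HypCauchySchwarz 2 K) :
    (∀ x y : X, 1 ≤ K x y) ∧
    (∀ x : X, arcosh (K x x) = 0) ∧
    (∀ x y : X, arcosh (K x y) = arcosh (K y x)) ∧
    (∀ x y z : X, arcosh (K x z) ≤ arcosh (K x y) + arcosh (K y z)) := by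
  have hone : ∀ x y, 1 ≤ K x y := hcs.one_le hnonneg hdiag
  refine ⟨hone, fun x => ?_, fun x y => by rw [hsymm], fun x y z => ?_⟩
  · rw [hdiag, arcosh_eq_real_arcosh, Real.arcosh_zero]
  · exact arcosh_le_arcosh_add_arcosh (hone x y) (hone y z) (zero_lt_one.trans_le (hone x z))
      (hcs.sq_sub_mul_le hsymm hdiag x y z)

/-- For a kernel of hyperbolic type `K`, one has `K ≥ 1` everywhere, and
`ρ(x,y) = arcosh (K x y)` is a pseudometric on `X`. -/
theorem arcosh_kernel_pseudometric {X : Type*} (K : X → X → ℝ) (hK : IsHypKernel K) :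
    (∀ x y : X, 1 ≤ K x y) ∧
    (∀ x : X, arcosh (K x x) = 0) ∧
    (∀ x y : X, arcosh (K x y) = arcosh (K y x)) ∧
    (∀ x y z : X, arcosh (K x z) ≤ arcosh (K x y) + arcosh (K y z)) := by
  obtain ⟨hsymm, hnonneg, hdiag, hcs⟩ := hK
  exact arcosh_kernel_pseudometric_general K hsymm hnonneg hdiag (hcs 2)
end

section
/- Let X be a set and let K : X × X → ℝ be a symmetric nonnegative function with K(x,x) = 1 for all x ∈ X. Then K is a kernel of hyperbolic type if and only if all its hyperbolic Cayley–Menger determinants are nonpositive: for every n ∈ ℕ and all points x₀,…,xₙ ∈ X (repetitions allowed), det((−K(xᵢ,xⱼ))_{0≤i,j≤n}) ≤ 0. -/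
/-!
The hyperbolic Cauchy–Schwarz inequality at a base point `o` says that the kernel
`L(x, y) = K(x, o) K(o, y) - K(x, y)` is positive semidefinite. Since `-K(o, o) = -1`, the kernel
`L` is the Schur complement of the entry `(o, o)` in `-K`, so each Cayley–Menger determinant with
first point `o` is the negative of a principal minor of `L`. A Hermitian matrix `M` with nonnegative
principal minors is positive semidefinite: the polynomial `det (1 + t M)` has constant term `1`, and
its coefficients are sums of principal minors, so it does not vanish for `t ≥ 0` and `M` has no
negative eigenvalue.
-/

section PrincipalMinors

open Matrix Polynomial

theorem det_one_add_smul_eq_sum_principal_minors {n R : Type*} [Fintype n] [DecidableEq n]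
    [CommRing R] (M : Matrix n n R) (t : R) :
    (1 + t • M).det =
      ∑ s : Finset n, (M.submatrix ((↑) : s → n) ((↑) : s → n)).det * t ^ s.card := by
  set p : R[X] := (1 + (X : R[X]) • M.map C).det with hp
  have eval_p : p.eval t = (1 + t • M).det := by
    rw [hp, ← coe_evalRingHom, RingHom.map_det]
    congr 1
    ext i j
    simp [Matrix.one_apply, apply_ite, mul_comm t]
  have natDegree_p : p.natDegree < Fintype.card n + 1 := by
    have h := natDegree_det_X_add_C_le M 1
    rw [Matrix.map_one C C_0 C_1, add_comm] at h
    exact Nat.lt_succ_of_le h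
  rw [← eval_p, eval_eq_sum_range' natDegree_p, ← Finset.powerset_univ, Finset.sum_powerset,
    Finset.card_univ]
  refine Finset.sum_congr rfl fun k _ => ?_
  rw [coeff_det_one_add_X_smul_eq_sum_minors, Finset.sum_mul]
  exact Finset.sum_congr rfl fun s hs => by rw [(Finset.mem_powersetCard.mp hs).2]

theorem one_le_det_one_add_smul_of_principal_minors_nonneg {n R : Type*} [Fintype n]
    [DecidableEq n] [CommRing R] [PartialOrder R] [IsOrderedRing R] {M : Matrix n n R}
    (hM : ∀ s : Finset n, 0 ≤ (M.submatrix ((↑) : s → n) ((↑) : s → n)).det)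
    {t : R} (ht : 0 ≤ t) : 1 ≤ (1 + t • M).det := by
  rw [det_one_add_smul_eq_sum_principal_minors]
  have h := Finset.single_le_sum (fun s _ => mul_nonneg (hM s) (pow_nonneg ht s.card))
    (Finset.mem_univ ∅)
  simpa using h

end PrincipalMinors

section PosSemidef

open Matrix
open scoped ComplexOrder

theorem posSemidef_iff_forall_fin_submatrix {n R : Type*} [Ring R] [PartialOrder R] [StarRing R]
    {M : Matrix n n R} :
    M.PosSemidef ↔ ∀ (k : ℕ) (x : Fin k → n), (M.submatrix x x).PosSemidef := by
  refine ⟨fun hM k x => hM.submatrix x, fun hM => ⟨?_, fun v => ?_⟩⟩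
  · ext i j
    exact (hM 2 ![i, j]).isHermitian.apply 0 1
  · let x : Fin _ → n := fun a => (v.support.equivFin.symm a : n)
    have hx : Function.Injective x :=
      Subtype.val_injective.comp v.support.equivFin.symm.injective
    have hv : (v.comapDomain x hx.injOn).mapDomain x = v := by
      refine Finsupp.mapDomain_comapDomain x hx v fun i hi => ⟨v.support.equivFin ⟨i, hi⟩, ?_⟩
      simp [x]
    rw [← hv]
    simpa [Finsupp.sum_mapDomain_index, add_mul, mul_add] using
      (hM _ x).2 (v.comapDomain x hx.injOn)

theorem det_one_add_smul_eq_zero_of_mulVec_eq_smul {n K : Type*} [Fintype n] [DecidableEq n]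
    [Field K] {M : Matrix n n K} {μ : K} {v : n → K} (hv : v ≠ 0) (hμ : μ ≠ 0)
    (hMv : M *ᵥ v = μ • v) : (1 + (-μ⁻¹) • M).det = 0 := by
  refine exists_mulVec_eq_zero_iff.mp ⟨v, hv, ?_⟩
  rw [add_mulVec, one_mulVec, smul_mulVec, hMv, smul_smul, neg_mul, inv_mul_cancel₀ hμ,
    neg_one_smul, add_neg_cancel]

variable {n 𝕜 : Type*} [RCLike 𝕜]

theorem posSemidef_of_principal_minors_nonneg [Finite n] [DecidableEq n] {M : Matrix n n 𝕜}
    (hM : M.IsHermitian)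
    (hminors : ∀ s : Finset n, 0 ≤ (M.submatrix ((↑) : s → n) ((↑) : s → n)).det) :
    M.PosSemidef := by
  cases nonempty_fintype n
  refine hM.posSemidef_iff_eigenvalues_nonneg.mpr fun i => ?_
  by_contra! hneg
  set μ : ℝ := hM.eigenvalues i
  have hμ : μ < 0 := hneg
  have ht : (0 : 𝕜) ≤ -(μ : 𝕜)⁻¹ := by
    exact_mod_cast (neg_pos.mpr (inv_lt_zero.mpr hμ)).le
  have hv : (hM.eigenvectorBasis i).ofLp ≠ 0 :=
    (WithLp.ofLp_eq_zero 2).not.mpr (hM.eigenvectorBasis.orthonormal.ne_zero i)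
  have hMv : M *ᵥ (hM.eigenvectorBasis i).ofLp = (μ : 𝕜) • (hM.eigenvectorBasis i).ofLp := by
    rw [hM.mulVec_eigenvectorBasis, RCLike.real_smul_eq_coe_smul (K := 𝕜)]
  have hdet := one_le_det_one_add_smul_of_principal_minors_nonneg hminors ht
  rw [det_one_add_smul_eq_zero_of_mulVec_eq_smul hv (by exact_mod_cast hμ.ne) hMv] at hdet
  exact zero_lt_one.not_ge hdet

theorem posSemidef_iff_forall_det_submatrix_nonneg {M : Matrix n n 𝕜} (hM : M.IsHermitian) :
    M.PosSemidef ↔ ∀ (k : ℕ) (x : Fin k → n), 0 ≤ (M.submatrix x x).det := by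
  refine ⟨fun h k x => (h.submatrix x).det_nonneg, fun h => ?_⟩
  refine posSemidef_iff_forall_fin_submatrix.mpr fun k x =>
    posSemidef_of_principal_minors_nonneg (hM.submatrix x) fun s => ?_
  rw [← det_submatrix_equiv_self s.equivFin.symm]
  exact h _ fun a => x (s.equivFin.symm a)

end PosSemidef

theorem det_eq_mul_det_schur_complement_zero {R : Type*} [CommRing R] {n : ℕ}
    (A : Matrix (Fin (n + 1)) (Fin (n + 1)) R) (u : Rˣ) (hu : A 0 0 = u) :
    A.det = u * (Matrix.of fun i j : Fin n =>
      A i.succ j.succ - A i.succ 0 * ↑u⁻¹ * A 0 j.succ).det := by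
  let c : Fin (n + 1) → R := Fin.cons 0 fun i => A i.succ 0 * ↑u⁻¹
  let B : Matrix (Fin (n + 1)) (Fin (n + 1)) R := .of fun i j => A i j - c i * A 0 j
  have hAB : A.det = B.det :=
    Matrix.det_eq_of_forall_row_eq_smul_add_const c 0 rfl fun i j => by simp [B, c]
  have B_succ_zero (i : Fin n) : B i.succ 0 = 0 := by simp [B, c, hu]
  rw [hAB, Matrix.det_succ_column_zero, Fin.sum_univ_succ]
  simp only [B_succ_zero, mul_zero, zero_mul, Finset.sum_const_zero, add_zero]
  congr 1
  simp [B, c, hu]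

section TangentKernel

variable {X R : Type*} [CommRing R]

/-- The kernel `K(x, o) K(o, y) - K(x, y)` attached to a kernel `K` and a base point `o`, encoded as
a matrix indexed by `X`. When `K = cosh ∘ dist` on hyperbolic space in the hyperboloid model, this
is the Gram kernel of the orthogonal projections of the points to the tangent space at `o`. -/
def tangentKernel (K : X → X → R) (o : X) : Matrix X X R :=
  .of fun x y => K x o * K o y - K x y

theorem isHermitian_tangentKernel [StarRing R] [TrivialStar R] {K : X → X → R}
    (hsym : ∀ x y, K x y = K y x) (o : X) : (tangentKernel K o).IsHermitian := by
  ext x y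
  simp [tangentKernel, hsym y, hsym o x, mul_comm]

theorem sum_sum_mul_tangentKernel {ι : Type*} [Fintype ι] {K : X → X → R} {o : X}
    (ho : ∀ x, K x o = K o x) (x : ι → X) (lam : ι → R) :
    ∑ i, ∑ j, lam i * lam j * tangentKernel K o (x i) (x j) =
      (∑ k, lam k * K o (x k)) ^ 2 - ∑ i, ∑ j, lam i * lam j * K (x i) (x j) := by
  rw [sq, Finset.sum_mul_sum]
  simp only [← Finset.sum_sub_distrib]
  refine Finset.sum_congr rfl fun i _ => Finset.sum_congr rfl fun j _ => ?_
  rw [tangentKernel, Matrix.of_apply, ho (x i)]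
  ring

theorem det_neg_cons_eq_neg_det_tangentKernel {n : ℕ} {K : X → X → R} {o : X}
    (ho : K o o = 1) (x : Fin n → X) :
    (Matrix.of fun i j : Fin (n + 1) =>
        -K ((Fin.cons o x : Fin (n + 1) → X) i) ((Fin.cons o x : Fin (n + 1) → X) j)).det =
      -((tangentKernel K o).submatrix x x).det := by
  rw [det_eq_mul_det_schur_complement_zero _ (-1) (by simp [ho])]
  simp only [Units.val_neg, Units.val_one, neg_one_mul]
  congr 2
  ext i j
  simp only [tangentKernel, Matrix.submatrix_apply, Matrix.of_apply, Fin.cons_succ, Fin.cons_zero,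
    inv_neg, inv_one, Units.val_neg, Units.val_one]
  ring

theorem posSemidef_tangentKernel_iff {K : X → X → ℝ} (hsym : ∀ x y, K x y = K y x) (o : X) :
    (tangentKernel K o).PosSemidef ↔ ∀ (n : ℕ) (x : Fin n → X) (lam : Fin n → ℝ),
      ∑ i, ∑ j, lam i * lam j * K (x i) (x j) ≤ (∑ k, lam k * K o (x k)) ^ 2 := by
  have quadForm_eq {n : ℕ} (x : Fin n → X) (lam : Fin n → ℝ) :
      star lam ⬝ᵥ ((tangentKernel K o).submatrix x x).mulVec lam =
        ∑ i, ∑ j, lam i * lam j * tangentKernel K o (x i) (x j) := by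
    simp only [dotProduct, Matrix.mulVec, Finset.mul_sum, Matrix.submatrix_apply, star_trivial,
      mul_assoc, mul_comm (lam _) (tangentKernel _ _ _ _)]
  rw [posSemidef_iff_forall_fin_submatrix]
  simp only [Matrix.posSemidef_iff_dotProduct_mulVec,
    (isHermitian_tangentKernel hsym o).submatrix _, true_and, quadForm_eq,
    sum_sum_mul_tangentKernel (hsym · o), sub_nonneg]

end TangentKernel

/-- A symmetric nonnegative kernel with diagonal `1` is of hyperbolic type if and only if
all its hyperbolic Cayley–Menger determinants `det((-K(xᵢ,xⱼ))_{0 ≤ i,j ≤ n})` are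
nonpositive (repetitions of points allowed). -/
theorem isHypKernel_iff_cayleyMenger {X : Type*} (K : X → X → ℝ)
    (hsym : ∀ x y, K x y = K y x) (hnn : ∀ x y, 0 ≤ K x y) (hdiag : ∀ x, K x x = 1) :
    IsHypKernel K ↔
      ∀ (n : ℕ) (x : Fin (n + 1) → X),
        (Matrix.of fun i j => -K (x i) (x j)).det ≤ 0 := by
  calc IsHypKernel K
    _ ↔ ∀ o, (tangentKernel K o).PosSemidef := by
      simp only [IsHypKernel, posSemidef_tangentKernel_iff hsym]
      exact ⟨fun h o n => h.2.2.2 n o, fun h => ⟨hsym, hnn, hdiag, fun n o => h o n⟩⟩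
    _ ↔ ∀ o (n : ℕ) (x : Fin n → X), 0 ≤ ((tangentKernel K o).submatrix x x).det :=
      forall_congr' fun o =>
        posSemidef_iff_forall_det_submatrix_nonneg (isHermitian_tangentKernel hsym o)
    _ ↔ ∀ (n : ℕ) (x : Fin (n + 1) → X), (Matrix.of fun i j => -K (x i) (x j)).det ≤ 0 := by
      simp only [Fin.forall_fin_succ_pi, det_neg_cons_eq_neg_det_tangentKernel (hdiag _),
        neg_nonpos]
      exact forall_comm
end

section
/- Let X be a set and let K : X × X → ℝ be a kernel of conditionally negative type that vanishes only on the diagonal (K(x,y) = 0 implies x = y). Then for every t ∈ (0,1), the pointwise power K^t is strictly of conditionally negative type: for all n, all pairwise distinct x₁,…,xₙ ∈ X and every nonzero λ ∈ ℝⁿ with ∑ₖ λₖ = 0, one has ∑_{i,j=1}^n λᵢλⱼ K(xᵢ,xⱼ)^t < 0. -/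
/-- A kernel of conditionally negative type on a set `X`: symmetric, vanishing on the
diagonal, with `∑ᵢⱼ λᵢλⱼ K(xᵢ,xⱼ) ≤ 0` whenever `∑ₖ λₖ = 0`. -/
def IsCondNegKernel {X : Type*} (K : X → X → ℝ) : Prop :=
  (∀ x y, K x y = K y x) ∧ (∀ x, K x x = 0) ∧
  ∀ (n : ℕ) (x : Fin n → X) (lam : Fin n → ℝ),
    (∑ k, lam k) = 0 → (∑ i, ∑ j, lam i * lam j * K (x i) (x j)) ≤ 0

/-!
For `t ∈ (0, 1)`, up to a positive factor, `r ^ t` is the integral over `s > 0` of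
`s ^ t * (s⁻¹ - (s + r)⁻¹)`. Against weights `λᵢλⱼ` with `∑ λᵢ = 0` the terms `s⁻¹` cancel, so it
suffices that the resolvent kernel `(s + K)⁻¹` is positive semidefinite for `s > 0` and gives a
positive value at `λ` for some `s`. The latter holds because `s * (s + K)⁻¹` tends to the identity
matrix as `s → 0`, since `K` vanishes only on the diagonal.

For semidefiniteness, fix a base point `o`; then `K x o + K y o - K x y` is positive semidefinite,
hence so is the kernel `B` determined by
`s * (s + K x y) = (s + K x o) * (s + K y o) * (1 - B x y)`. As `B < 1` on the diagonal, `(1 - B)⁻¹`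
is the geometric series of the entrywise powers of `B`, which are positive semidefinite by Schur's
product theorem.
-/

section PosSemidef

open Matrix

variable {X : Type*}

theorem posSemidef_iff_forall_fin_sum_nonneg {M : Matrix X X ℝ} :
    M.PosSemidef ↔ M.IsSymm ∧ ∀ (n : ℕ) (x : Fin n → X) (c : Fin n → ℝ),
      0 ≤ ∑ i, ∑ j, c i * c j * M (x i) (x j) := by
  refine ⟨fun hM => ⟨hM.isHermitian, fun n x c => ?_⟩, fun ⟨hsymm, hM⟩ => ⟨hsymm, fun c => ?_⟩⟩
  · simpa [dotProduct, mulVec, Finset.mul_sum, mul_assoc, mul_comm, mul_left_comm] using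
      (hM.submatrix x).dotProduct_mulVec_nonneg c
  · let e := c.support.equivFin.symm
    have h := hM _ (fun i => (e i : X)) (fun i => c (e i))
    rw [e.sum_comp fun y => ∑ j, c y * c (e j) * M y (e j)] at h
    simp only [fun y : c.support => e.sum_comp fun z => c y * c z * M y z] at h
    rw [Finset.sum_coe_sort c.support fun y => ∑ z : c.support, c y * c z * M y z] at h
    simp only [fun y => Finset.sum_coe_sort c.support fun z => c y * c z * M y z] at h
    simpa only [Finsupp.sum, star_trivial, mul_right_comm] using h

theorem posSemidef_vecMulVec_self (v : X → ℝ) : (vecMulVec v v).PosSemidef := by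
  refine posSemidef_iff_forall_fin_sum_nonneg.2
    ⟨IsSymm.ext fun x y => mul_comm _ _, fun n x c => ?_⟩
  calc 0 ≤ (∑ i, c i * v (x i)) * ∑ j, c j * v (x j) := mul_self_nonneg _
    _ = _ := by simp only [Finset.sum_mul_sum, vecMulVec_apply, mul_mul_mul_comm]

theorem posSemidef_map_pow {B : Matrix X X ℝ} (hB : B.PosSemidef) (k : ℕ) :
    (B.map (· ^ k)).PosSemidef := by
  induction k with
  | zero =>
    have hone : B.map (· ^ 0) = vecMulVec (fun _ => 1) fun _ => 1 := by
      ext x y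
      simp [vecMulVec_apply]
    exact hone ▸ posSemidef_vecMulVec_self _
  | succ k ih =>
    have hsucc : B.map (· ^ (k + 1)) = B.map (· ^ k) ⊙ B := by
      ext x y
      simp [pow_succ]
    exact hsucc ▸ ih.hadamard hB

theorem posSemidef_of_hasSum_s13 {ι : Type*} {A : ι → Matrix X X ℝ} {M : Matrix X X ℝ}
    (hA : ∀ k, (A k).PosSemidef) (hM : ∀ x y, HasSum (fun k => A k x y) (M x y)) :
    M.PosSemidef := by
  refine posSemidef_iff_forall_fin_sum_nonneg.2 ⟨IsSymm.ext fun x y => ?_, fun n x c => ?_⟩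
  · refine (hM y x).unique ((hM x y).congr_fun ?_)
    exact fun k => (hA k).isHermitian.apply x y
  · have hsum := hasSum_sum (s := Finset.univ) fun i _ =>
      hasSum_sum (s := Finset.univ) fun j _ => (hM (x i) (x j)).mul_left (c i * c j)
    exact hsum.nonneg fun k => (posSemidef_iff_forall_fin_sum_nonneg.1 (hA k)).2 n x c

theorem two_mul_abs_apply_le_of_posSemidef {B : Matrix X X ℝ} (hB : B.PosSemidef) (x y : X) :
    2 * |B x y| ≤ B x x + B y y := by
  obtain ⟨hsymm, hnonneg⟩ := posSemidef_iff_forall_fin_sum_nonneg.1 hB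
  have hadd := hnonneg 2 ![x, y] ![1, 1]
  have hsub := hnonneg 2 ![x, y] ![1, -1]
  simp only [Fin.sum_univ_two, Fin.isValue, cons_val_zero, mul_one, cons_val_one,
    cons_val_fin_one, one_mul, hsymm.apply x y, mul_neg, neg_mul, neg_neg] at hadd hsub
  cases abs_cases (B x y) <;> linarith

theorem posSemidef_inv_one_sub {B : Matrix X X ℝ} (hB : B.PosSemidef) (hdiag : ∀ x, B x x < 1) :
    (of fun x y => (1 - B x y)⁻¹).PosSemidef := by
  refine posSemidef_of_hasSum_s13 (posSemidef_map_pow hB) fun x y => ?_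
  have hlt : |B x y| < 1 := by
    linarith [two_mul_abs_apply_le_of_posSemidef hB x y, hdiag x, hdiag y]
  exact hasSum_geometric_of_abs_lt_one hlt

end PosSemidef

namespace IsCondNegKernel

open Matrix

variable {X : Type*} {K : X → X → ℝ}

theorem nonneg (hK : IsCondNegKernel K) (x y : X) : 0 ≤ K x y := by
  obtain ⟨hsymm, hdiag, hneg⟩ := hK
  have h := hneg 2 ![x, y] ![1, -1] (by simp)
  simp only [Fin.sum_univ_two, Fin.isValue, cons_val_zero, mul_one, cons_val_one,
    cons_val_fin_one, mul_neg, neg_mul, hdiag, mul_zero, one_mul, hsymm y x] at h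
  linarith

theorem posSemidef_add_sub (hK : IsCondNegKernel K) (o : X) :
    (of fun x y => K x o + K y o - K x y).PosSemidef := by
  obtain ⟨hsymm, hdiag, hneg⟩ := hK
  refine posSemidef_iff_forall_fin_sum_nonneg.2 ⟨IsSymm.ext fun x y => ?_, fun n x c => ?_⟩
  · simp only [of_apply, hsymm y x]
    ring
  · have h := hneg (n + 1) (Fin.cons o x) (Fin.cons (-∑ i, c i) c) (by simp [Fin.sum_univ_succ])
    simp only [Fin.sum_univ_succ, Fin.cons_zero, Fin.cons_succ, hdiag, hsymm o, mul_zero, neg_mul,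
      mul_neg, Finset.sum_add_distrib, Finset.sum_neg_distrib, Finset.sum_const_zero,
      Finset.mul_sum, Finset.sum_mul] at h
    simp only [of_apply, mul_sub, mul_add, Finset.sum_add_distrib, Finset.sum_sub_distrib]
    rw [Finset.sum_comm (f := fun i j => c i * c j * K (x j) o)]
    linarith

theorem posSemidef_inv_add (hK : IsCondNegKernel K) {s : ℝ} (hs : 0 < s) :
    (of fun x y => (s + K x y)⁻¹).PosSemidef := by
  obtain _ | ⟨⟨o⟩⟩ := isEmpty_or_nonempty X
  · exact Subsingleton.elim 0 (of fun x y => (s + K x y)⁻¹) ▸ PosSemidef.zero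
  have hpos (x y : X) : 0 < s + K x y := add_pos_of_pos_of_nonneg hs (hK.nonneg x y)
  let v (x : X) : ℝ := (s + K x o)⁻¹
  have hv (x : X) : 0 < v x := inv_pos.2 (hpos x o)
  let w (x : X) : ℝ := v x * K x o
  let B : Matrix X X ℝ :=
    vecMulVec w w + s • vecMulVec v v ⊙ of fun x y => K x o + K y o - K x y
  have hB : B.PosSemidef := (posSemidef_vecMulVec_self w).add
    (((posSemidef_vecMulVec_self v).hadamard (hK.posSemidef_add_sub o)).smul hs.le)
  have one_sub_B (x y : X) : 1 - B x y = s * (v x * v y) * (s + K x y) := by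
    have hxo := (hpos x o).ne'
    have hyo := (hpos y o).ne'
    simp only [B, v, w, Matrix.add_apply, Matrix.smul_apply, hadamard_apply, vecMulVec_apply,
      of_apply, smul_eq_mul]
    field_simp
    ring
  have hdiag (x : X) : B x x < 1 := by
    rw [← sub_pos, one_sub_B]
    exact mul_pos (mul_pos hs (mul_pos (hv x) (hv x))) (hpos x x)
  have hinv : (of fun x y => (s + K x y)⁻¹) =
      s • vecMulVec v v ⊙ of fun x y => (1 - B x y)⁻¹ := by
    ext x y
    have hvx := (hv x).ne'
    have hvy := (hv y).ne'
    have hxy := (hpos x y).ne'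
    simp only [Matrix.smul_apply, hadamard_apply, vecMulVec_apply, of_apply, smul_eq_mul, one_sub_B]
    field_simp
  exact hinv ▸ ((posSemidef_vecMulVec_self v).hadamard (posSemidef_inv_one_sub hB hdiag)).smul hs.le

end IsCondNegKernel

section Integral

open Filter MeasureTheory Set Topology

theorem setIntegral_pos_of_continuousOn {α : Type*} [TopologicalSpace α] [MeasurableSpace α]
    [OpensMeasurableSpace α] {μ : Measure α} [μ.IsOpenPosMeasure] {U : Set α} {f : α → ℝ}
    (hU : IsOpen U) (hcont : ContinuousOn f U) (hint : IntegrableOn f U μ)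
    (hnonneg : ∀ u ∈ U, 0 ≤ f u) (hpos : ∃ u ∈ U, 0 < f u) : 0 < ∫ u in U, f u ∂μ := by
  obtain ⟨u, hu, hfu⟩ := hpos
  rw [setIntegral_pos_iff_support_of_nonneg_ae
    (ae_restrict_of_forall_mem hU.measurableSet hnonneg) hint]
  have hopen : IsOpen (U ∩ f ⁻¹' Ioi 0) := hcont.isOpen_inter_preimage hU isOpen_Ioi
  exact (hopen.measure_pos μ ⟨u, hu, hfu⟩).trans_le
    (measure_mono fun r hr => ⟨ne_of_gt hr.2, hr.1⟩)

theorem tendsto_mul_inv_add_nhdsGT_zero (y : ℝ) :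
    Tendsto (fun s : ℝ => s * (s + y)⁻¹) (𝓝[>] 0) (𝓝 (if y = 0 then 1 else 0)) := by
  split_ifs with hy
  · refine tendsto_const_nhds.congr' ?_
    filter_upwards [self_mem_nhdsWithin] with s hs
    rw [hy, add_zero, mul_inv_cancel₀ (ne_of_gt hs)]
  · have hy' : (0 : ℝ) + y ≠ 0 := by rwa [zero_add]
    have hcont : ContinuousAt (fun s : ℝ => s * (s + y)⁻¹) 0 := by
      fun_prop (disch := assumption)
    simpa using hcont.tendsto.mono_left nhdsWithin_le_nhds

variable {ι : Type*} [Fintype ι] {a y : ι → ℝ} {t : ℝ}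

theorem exists_sum_mul_inv_add_pos (ha : 0 < ∑ i with y i = 0, a i) :
    ∃ s > 0, 0 < ∑ i, a i * (s + y i)⁻¹ := by
  have hlim : Tendsto (fun s : ℝ => ∑ i, a i * (s * (s + y i)⁻¹)) (𝓝[>] 0)
      (𝓝 (∑ i with y i = 0, a i)) := by
    simpa [Finset.sum_filter] using tendsto_finsetSum Finset.univ fun i _ =>
      (tendsto_mul_inv_add_nhdsGT_zero (y i)).const_mul (a i)
  obtain ⟨s, hpos, hs⟩ := ((hlim.eventually_const_lt ha).and self_mem_nhdsWithin).exists
  refine ⟨s, hs, pos_of_mul_pos_right ?_ (le_of_lt hs)⟩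
  simpa only [Finset.mul_sum, mul_left_comm] using hpos

theorem sum_mul_rpow_eq_integral (ht : t ∈ Ioo 0 1) (hy : ∀ i, 0 ≤ y i) :
    ∑ i, a i * y i ^ t = (∫ s in Ioi 0, Real.rpowIntegrand₀₁ t s 1)⁻¹ *
      ∫ s in Ioi 0, ∑ i, a i * Real.rpowIntegrand₀₁ t s (y i) := by
  rw [integral_finsetSum _ fun i _ =>
    (Real.integrableOn_rpowIntegrand₀₁_Ioi ht (hy i)).const_mul _, Finset.mul_sum]
  refine Finset.sum_congr rfl fun i _ => ?_
  rw [integral_const_mul, Real.rpow_eq_const_mul_integral ht (hy i), mul_left_comm]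

theorem sum_mul_rpowIntegrand₀₁_of_sum_eq_zero (ha : ∑ i, a i = 0) (s : ℝ) :
    ∑ i, a i * Real.rpowIntegrand₀₁ t s (y i) = -(s ^ t * ∑ i, a i * (s + y i)⁻¹) := by
  calc ∑ i, a i * Real.rpowIntegrand₀₁ t s (y i)
      = s ^ t * ((∑ i, a i) * s⁻¹ - ∑ i, a i * (s + y i)⁻¹) := by
        simp only [Real.rpowIntegrand₀₁, Finset.sum_mul, ← Finset.sum_sub_distrib, Finset.mul_sum]
        exact Finset.sum_congr rfl fun i _ => by ring
    _ = -(s ^ t * ∑ i, a i * (s + y i)⁻¹) := by rw [ha]; ring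

theorem sum_mul_rpow_neg (ht : t ∈ Ioo 0 1) (hy : ∀ i, 0 ≤ y i) (ha : ∑ i, a i = 0)
    (hnonneg : ∀ s > 0, 0 ≤ ∑ i, a i * (s + y i)⁻¹) (hpos : ∃ s > 0, 0 < ∑ i, a i * (s + y i)⁻¹) :
    ∑ i, a i * y i ^ t < 0 := by
  have hcont : ContinuousOn (fun s => s ^ t * ∑ i, a i * (s + y i)⁻¹) (Ioi 0) := by
    intro s hs
    have hs' : s ≠ 0 := ne_of_gt hs
    have hsy (i : ι) : s + y i ≠ 0 := (add_pos_of_pos_of_nonneg hs (hy i)).ne'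
    fun_prop (disch := first | assumption | exact Or.inl hs' | exact hsy _)
  have hint : IntegrableOn (fun s => s ^ t * ∑ i, a i * (s + y i)⁻¹) (Ioi 0) := by
    refine integrable_neg_iff.1 ?_
    simp only [Pi.neg_def, ← sum_mul_rpowIntegrand₀₁_of_sum_eq_zero ha]
    exact integrable_finsetSum _ fun i _ =>
      (Real.integrableOn_rpowIntegrand₀₁_Ioi ht (hy i)).const_mul _
  have hintegral : 0 < ∫ s in Ioi 0, s ^ t * ∑ i, a i * (s + y i)⁻¹ := by
    refine setIntegral_pos_of_continuousOn isOpen_Ioi hcont hint ?_ ?_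
    · exact fun s hs => mul_nonneg (Real.rpow_nonneg (le_of_lt hs) t) (hnonneg s hs)
    · obtain ⟨s, hs, hsum⟩ := hpos
      exact ⟨s, hs, mul_pos (Real.rpow_pos_of_pos hs t) hsum⟩
  rw [sum_mul_rpow_eq_integral ht hy]
  simp only [sum_mul_rpowIntegrand₀₁_of_sum_eq_zero ha, integral_neg]
  exact mul_neg_of_pos_of_neg (inv_pos.2 (Real.integral_rpowIntegrand₀₁_one_pos ht))
    (neg_neg_of_pos hintegral)

end Integral

/-- If `K` is a kernel of conditionally negative type vanishing only on the diagonal,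
then for every `t ∈ (0,1)` the power `K^t` is strictly of conditionally negative type. -/
theorem pow_strictly_condNeg {X : Type*} (K : X → X → ℝ) (hK : IsCondNegKernel K)
    (hvan : ∀ x y : X, K x y = 0 → x = y) (t : ℝ) (ht : t ∈ Set.Ioo (0 : ℝ) 1) :
    ∀ (n : ℕ) (x : Fin n → X), Function.Injective x →
      ∀ lam : Fin n → ℝ, lam ≠ 0 → (∑ k, lam k) = 0 →
        (∑ i, ∑ j, lam i * lam j * K (x i) (x j) ^ t) < 0 := by
  intro n x hx lam hlam hsum
  have hzero (i j : Fin n) : K (x i) (x j) = 0 ↔ i = j :=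
    ⟨fun h => hx (hvan _ _ h), fun h => h ▸ hK.2.1 (x i)⟩
  have hresolvent (s : ℝ) (hs : 0 < s) :
      0 ≤ ∑ p : Fin n × Fin n, lam p.1 * lam p.2 * (s + K (x p.1) (x p.2))⁻¹ := by
    rw [Fintype.sum_prod_type]
    exact (posSemidef_iff_forall_fin_sum_nonneg.1 (hK.posSemidef_inv_add hs)).2 n x lam
  have hdiag : 0 < ∑ p : Fin n × Fin n with K (x p.1) (x p.2) = 0, lam p.1 * lam p.2 := by
    obtain ⟨k, hk⟩ := Function.ne_iff.1 hlam
    simpa [Finset.sum_filter, Fintype.sum_prod_type, hzero] using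
      Finset.sum_pos' (fun i _ => mul_self_nonneg (lam i)) ⟨k, Finset.mem_univ k, mul_self_pos.2 hk⟩
  have htotal : ∑ p : Fin n × Fin n, lam p.1 * lam p.2 = 0 := by
    rw [Fintype.sum_prod_type, ← Finset.sum_mul_sum, hsum, zero_mul]
  have hneg := sum_mul_rpow_neg ht (fun p : Fin n × Fin n => hK.nonneg (x p.1) (x p.2)) htotal
    hresolvent (exists_sum_mul_inv_add_pos hdiag)
  rwa [Fintype.sum_prod_type] at hneg
end

section
/- Let X be a set and let K : X × X → ℝ be a kernel strictly of conditionally negative type. Then for every real Hilbert space H and every map f : X → H satisfying K(x,y) = ‖f(x) − f(y)‖² for all x,y ∈ X, the family (f(x))_{x∈X} is affinely independent over ℝ; in particular f is injective. -/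
/-!
For weights `λ` with `∑ₖ λₖ = 0`, expanding the inner product gives
`‖∑ₖ λₖ f(xₖ)‖² = -½ ∑ᵢⱼ λᵢλⱼ ‖f(xᵢ) - f(xⱼ)‖²`. An affine dependence among the `f(xₖ)` makes the
left side vanish, while strictness makes the right side positive for distinct `xₖ` and `λ ≠ 0`.
-/

/-- The strict inequality for kernels: a kernel `K` is strictly of conditionally negative type when
`IsCondNegKernel K` and `IsStrictlyCondNeg K` both hold. -/
def IsStrictlyCondNeg {X : Type*} (K : X → X → ℝ) : Prop :=
  ∀ (n : ℕ) (x : Fin n → X), Function.Injective x →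
    ∀ lam : Fin n → ℝ, lam ≠ 0 → (∑ k, lam k) = 0 →
      (∑ i, ∑ j, lam i * lam j * K (x i) (x j)) < 0

theorem IsStrictlyCondNeg.sum_sum_neg {X : Type*} {K : X → X → ℝ} (hK : IsStrictlyCondNeg K)
    {s : Finset X} {w : X → ℝ} (hw : ∑ x ∈ s, w x = 0) (hne : ∃ x ∈ s, w x ≠ 0) :
    ∑ x ∈ s, ∑ y ∈ s, w x * w y * K x y < 0 := by
  obtain ⟨x, hx, hwx⟩ := hne
  let e := s.equivFin.symm
  have sum_enum (g : X → ℝ) : ∑ k, g (e k) = ∑ x ∈ s, g x :=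
    (e.sum_comp fun x : s ↦ g x).trans (s.sum_coe_sort g)
  have hlam : (fun k ↦ w (e k)) ≠ 0 :=
    Function.ne_iff.mpr ⟨e.symm ⟨x, hx⟩, by simpa using hwx⟩
  calc ∑ x ∈ s, ∑ y ∈ s, w x * w y * K x y
      = ∑ i, ∑ j, w (e i) * w (e j) * K (e i) (e j) := by
        simp_rw [← sum_enum]
    _ < 0 := hK s.card (fun k ↦ e k) (Subtype.val_injective.comp e.injective) _ hlam
        ((sum_enum w).trans hw)

section InnerProductSpace

variable {V P : Type*} [SeminormedAddCommGroup V] [InnerProductSpace ℝ V] [PseudoMetricSpace P]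
  [NormedAddTorsor V P]

theorem norm_weightedVSub_sq {ι : Type*} {s : Finset ι} {w : ι → ℝ} (p : ι → P)
    (hw : ∑ i ∈ s, w i = 0) :
    ‖s.weightedVSub p w‖ ^ 2 = -(∑ i ∈ s, ∑ j ∈ s, w i * w j * dist (p i) (p j) ^ 2) / 2 := by
  rw [← real_inner_self_eq_norm_sq, Finset.weightedVSub_apply,
    inner_sum_smul_sum_smul_of_sum_eq_zero _ hw _ hw]
  simp_rw [vsub_sub_vsub_cancel_right, ← dist_eq_norm_vsub V, ← pow_two]

theorem affineIndependent_of_strictly_condNegKernel_general {X : Type*} {K : X → X → ℝ}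
    (hK : IsStrictlyCondNeg K) {f : X → P} (hf : ∀ x y, K x y = dist (f x) (f y) ^ 2) :
    AffineIndependent ℝ f := by
  rw [affineIndependent_def]
  intro s w hw hdep
  by_contra! hne
  have hneg : ∑ x ∈ s, ∑ y ∈ s, w x * w y * dist (f x) (f y) ^ 2 < 0 := by
    simpa only [hf] using hK.sum_sum_neg hw hne
  have hzero := norm_weightedVSub_sq f hw
  rw [hdep, norm_zero] at hzero
  linarith

end InnerProductSpace

/-- If `K` is strictly of conditionally negative type, then any map `f : X → H` into a
real Hilbert space realizing `K` as `K(x,y) = ‖f x − f y‖²` has affinely independent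
image; in particular `f` is injective. -/
theorem affineIndependent_of_strictly_condNegKernel {X : Type*} (K : X → X → ℝ)
    (hK : IsCondNegKernel K)
    (hstrict : ∀ (n : ℕ) (x : Fin n → X), Function.Injective x →
      ∀ lam : Fin n → ℝ, lam ≠ 0 → (∑ k, lam k) = 0 →
        (∑ i, ∑ j, lam i * lam j * K (x i) (x j)) < 0)
    {H : Type*} [NormedAddCommGroup H] [InnerProductSpace ℝ H] [CompleteSpace H]
    (f : X → H) (hf : ∀ x y, K x y = ‖f x - f y‖ ^ 2) :
    AffineIndependent ℝ f ∧ Function.Injective f := by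
  have hind : AffineIndependent ℝ f :=
    affineIndependent_of_strictly_condNegKernel_general hstrict fun x y ↦ by rw [hf, dist_eq_norm]
  exact ⟨hind, hind.injective⟩
end

section
/- Let a⁻, a⁺, b⁻, b⁺ ∈ ℝ be pairwise distinct. For all sequences (x_n), (x'_n), (y_n), (y'_n) of points of the hyperbolic upper half-plane whose underlying complex numbers converge respectively to a⁻, a⁺, b⁻, b⁺, one has the convergence exp((1/2)·(dist(x_n,x'_n) + dist(y_n,y'_n) − dist(x_n,y'_n) − dist(y_n,x'_n))) → |(a⁺−a⁻)(b⁺−b⁻)| / |(a⁺−b⁻)(b⁺−a⁻)|. In other words, the cross-ratio of the hyperbolic plane extends continuously to quadruples of distinct boundary points, where it equals the modulus of the projective cross-ratio. -/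
open Filter

/-!
For points of the upper half-plane, `|z - w| + |z - w̄| = 2 √(Im z) √(Im w) exp (d(z, w) / 2)`.
The factors `√(Im ·)`, which vanish at the boundary, cancel in the cross-ratio, because each of the
four points occurs once in its numerator and once in its denominator. The cross-ratio is therefore a
quotient of products of the functions `|z - w| + |z - w̄|`, which are continuous on all of `ℂ × ℂ`
and equal to `2 |a - b|` at real points `a`, `b`.
-/

open scoped ComplexConjugate Topology UpperHalfPlane

/-- The cross-ratio `[x, x'; y, y']` of four points of a metric space. -/
noncomputable def metricCrossRatio {X : Type*} [Dist X] (x x' y y' : X) : ℝ :=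
  Real.exp ((1 / 2) * (dist x x' + dist y y' - dist x y' - dist y x'))

/-- The function `|z - w| + |z - w̄|`: the renormalization of `exp (d(z, w) / 2)`, where
`d` is the hyperbolic distance, that stays finite when `z` or `w` tends to the real line. It is
defined on all of `ℂ`, so that no closed half-plane has to be introduced as a type. -/
noncomputable def expDistKernel (z w : ℂ) : ℝ :=
  dist z w + dist z (conj w)

/-- The extension of the cross-ratio of the hyperbolic plane to the closed upper half-plane. As for
`expDistKernel`, the arguments range over `ℂ`; the value is the junk value `0` if the denominator
vanishes. -/
noncomputable def extendedCrossRatio (a a' b b' : ℂ) : ℝ :=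
  expDistKernel a a' * expDistKernel b b' / (expDistKernel a b' * expDistKernel b a')

theorem metricCrossRatio_eq_div {X : Type*} [Dist X] (x x' y y' : X) :
    metricCrossRatio x x' y y' =
      Real.exp (dist x x' / 2) * Real.exp (dist y y' / 2) /
        (Real.exp (dist x y' / 2) * Real.exp (dist y x' / 2)) := by
  rw [metricCrossRatio, ← Real.exp_add, ← Real.exp_add, ← Real.exp_sub]
  ring_nf

theorem expDistKernel_coe (z w : ℍ) :
    expDistKernel z w = 2 * √z.im * √w.im * Real.exp (dist z w / 2) := by
  rw [UpperHalfPlane.exp_half_dist, Real.sqrt_mul z.im_pos.le, expDistKernel]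
  field_simp

theorem expDistKernel_ofReal (a b : ℝ) : expDistKernel a b = 2 * |a - b| := by
  rw [expDistKernel, Complex.conj_ofReal, Complex.isometry_ofReal.dist_eq, Real.dist_eq, two_mul]

theorem expDistKernel_eq_zero_iff {z w : ℂ} : expDistKernel z w = 0 ↔ z = w ∧ z.im = 0 := by
  rw [expDistKernel, add_eq_zero_iff_of_nonneg dist_nonneg dist_nonneg, dist_eq_zero, dist_eq_zero,
    ← Complex.conj_eq_iff_im, eq_comm (a := conj z)]
  exact and_congr_right fun h => by rw [h]

theorem expDistKernel_ne_zero {z w : ℂ} (h : z ≠ w ∨ z.im ≠ 0) : expDistKernel z w ≠ 0 :=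
  expDistKernel_eq_zero_iff.not.2 (not_and_or.2 h)

theorem tendsto_expDistKernel {ι : Type*} {l : Filter ι} {u v : ι → ℂ} {a b : ℂ}
    (hu : Tendsto u l (𝓝 a)) (hv : Tendsto v l (𝓝 b)) :
    Tendsto (fun i => expDistKernel (u i) (v i)) l (𝓝 (expDistKernel a b)) :=
  (hu.dist hv).add (hu.dist ((Complex.continuous_conj.tendsto b).comp hv))

theorem extendedCrossRatio_coe (x x' y y' : ℍ) :
    extendedCrossRatio x x' y y' = metricCrossRatio x x' y y' := by
  simp only [extendedCrossRatio, expDistKernel_coe, metricCrossRatio_eq_div]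
  field_simp

theorem extendedCrossRatio_ofReal (a a' b b' : ℝ) :
    extendedCrossRatio a a' b b' = |(a' - a) * (b' - b)| / |(a' - b) * (b' - a)| := by
  simp only [extendedCrossRatio, expDistKernel_ofReal, abs_mul]
  rw [abs_sub_comm a a', abs_sub_comm b b', abs_sub_comm a b', abs_sub_comm b a',
    mul_mul_mul_comm, mul_mul_mul_comm 2 |b' - a|, mul_div_mul_left _ _ (by norm_num),
    mul_comm |b' - a|]

theorem tendsto_extendedCrossRatio {ι : Type*} {l : Filter ι} {u u' v v' : ι → ℂ} {a a' b b' : ℂ}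
    (hab' : a ≠ b' ∨ a.im ≠ 0) (hba' : b ≠ a' ∨ b.im ≠ 0)
    (hu : Tendsto u l (𝓝 a)) (hu' : Tendsto u' l (𝓝 a'))
    (hv : Tendsto v l (𝓝 b)) (hv' : Tendsto v' l (𝓝 b')) :
    Tendsto (fun i => extendedCrossRatio (u i) (u' i) (v i) (v' i)) l
      (𝓝 (extendedCrossRatio a a' b b')) :=
  ((tendsto_expDistKernel hu hu').mul (tendsto_expDistKernel hv hv')).div
    ((tendsto_expDistKernel hu hv').mul (tendsto_expDistKernel hv hu'))
    (mul_ne_zero (expDistKernel_ne_zero hab') (expDistKernel_ne_zero hba'))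

theorem crossRatio_boundary_limit_general {ι : Type*} {l : Filter ι} {x x' y y' : ι → ℍ}
    {a a' b b' : ℂ} (hab' : a ≠ b' ∨ a.im ≠ 0) (hba' : b ≠ a' ∨ b.im ≠ 0)
    (hx : Tendsto (fun i => (x i : ℂ)) l (𝓝 a)) (hx' : Tendsto (fun i => (x' i : ℂ)) l (𝓝 a'))
    (hy : Tendsto (fun i => (y i : ℂ)) l (𝓝 b)) (hy' : Tendsto (fun i => (y' i : ℂ)) l (𝓝 b')) :
    Tendsto (fun i => metricCrossRatio (x i) (x' i) (y i) (y' i)) l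
      (𝓝 (extendedCrossRatio a a' b b')) := by
  simpa only [extendedCrossRatio_coe] using tendsto_extendedCrossRatio hab' hba' hx hx' hy hy'

/-- The cross-ratio of the hyperbolic plane extends continuously to quadruples of
pairwise distinct boundary points, where it equals the modulus of the projective
cross-ratio: if `xₙ → a⁻`, `x'ₙ → a⁺`, `yₙ → b⁻`, `y'ₙ → b⁺` in the closure of the upper
half-plane (with `a⁻, a⁺, b⁻, b⁺ ∈ ℝ` pairwise distinct), then
`exp(½(d(xₙ,x'ₙ)+d(yₙ,y'ₙ)−d(xₙ,y'ₙ)−d(yₙ,x'ₙ))) → |(a⁺−a⁻)(b⁺−b⁻)|/|(a⁺−b⁻)(b⁺−a⁻)|`. -/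
theorem crossRatio_boundary_limit (aminus aplus bminus bplus : ℝ)
    (h₁ : aminus ≠ aplus) (h₂ : aminus ≠ bminus) (h₃ : aminus ≠ bplus)
    (h₄ : aplus ≠ bminus) (h₅ : aplus ≠ bplus) (h₆ : bminus ≠ bplus)
    (x x' y y' : ℕ → UpperHalfPlane)
    (hx : Tendsto (fun n => (x n : ℂ)) atTop (nhds (aminus : ℂ)))
    (hx' : Tendsto (fun n => (x' n : ℂ)) atTop (nhds (aplus : ℂ)))
    (hy : Tendsto (fun n => (y n : ℂ)) atTop (nhds (bminus : ℂ)))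
    (hy' : Tendsto (fun n => (y' n : ℂ)) atTop (nhds (bplus : ℂ))) :
    Tendsto (fun n => Real.exp ((1 / 2) *
        (dist (x n) (x' n) + dist (y n) (y' n)
          - dist (x n) (y' n) - dist (y n) (x' n))))
      atTop
      (nhds (|(aplus - aminus) * (bplus - bminus)| /
        |(aplus - bminus) * (bplus - aminus)|)) := by
  rw [← extendedCrossRatio_ofReal]
  exact crossRatio_boundary_limit_general (.inl (mod_cast h₃)) (.inl (mod_cast h₄.symm))
    hx hx' hy hy'
end

section
/- Let K be a field with a complete, non-trivial, non-Archimedean multiplicative absolute value |·| (so |x+y| ≤ max(|x|,|y|)). Let G = SL₂(K), topologized by entrywise convergence of matrices. Let B ⊆ G be norm-bounded, i.e., there is M ≥ 0 with |g_{ij}| ≤ M for every g ∈ B and all entries g_{ij}. Then B is coarsely bounded: for every metric space (X,d) on which G acts continuously by isometries and every point x ∈ X, the orbit set {g·x : g ∈ B} is a bounded subset of X. -/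
/-- `SL₂(K)` carries the topology of entrywise convergence of matrices. -/
instance sl2TopologicalSpace {K : Type*} [NormedField K] :
    TopologicalSpace (Matrix.SpecialLinearGroup (Fin 2) K) :=
  TopologicalSpace.induced (fun g => (g : Matrix (Fin 2) (Fin 2) K)) inferInstance

/-!
The sets with bounded orbits under all continuous isometric actions are stable under products and
finite unions. Conjugation by `diag(a, a⁻¹)` scales the transvections by `a²`, so every bounded set
of transvections is conjugate into an arbitrarily small neighbourhood of `1`, on which the orbit map
is bounded by continuity. A matrix in `SL₂(K)` whose lower-left entry is nonzero is a product of
three transvections, of norm controlled by the entries and by the inverse of that one. Since the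
determinant is `1`, the first column of a matrix in `B` cannot be small, and left multiplication by
the Weyl element `S` exchanges its two entries up to sign.
-/

open Bornology Filter Matrix.SpecialLinearGroup
open scoped MatrixGroups Pointwise Topology

/-- A subset `B` of a topological group (or monoid) `G` is coarsely bounded if it has bounded orbits
for every continuous isometric action of `G`. The actions range over the spaces in a fixed universe
`v`, and pseudometric spaces are allowed: they yield the same notion, since the action descends to
the metric quotient. -/
def IsCoarselyBounded.{v, u} {G : Type u} [Monoid G] [TopologicalSpace G] (B : Set G) : Prop :=
  ∀ (X : Type v) [PseudoMetricSpace X] [MulAction G X] [IsIsometricSMul G X] [ContinuousSMul G X]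
    (x : X), IsBounded ((fun g : G => g • x) '' B)

universe v

section IsometricAction

variable {G X : Type*} [PseudoMetricSpace X]

lemma isBounded_smul_image_iff [SMul G X] {B : Set G} {x : X} :
    IsBounded ((fun g : G => g • x) '' B) ↔ ∃ C, ∀ g ∈ B, dist (g • x) x ≤ C := by
  simp only [Metric.isBounded_iff_subset_closedBall x, Set.image_subset_iff]
  rfl

lemma dist_mul_smul_le [Monoid G] [MulAction G X] [IsIsometricSMul G X] (g h : G) (x : X) :
    dist ((g * h) • x) x ≤ dist (g • x) x + dist (h • x) x :=
  calc dist ((g * h) • x) x ≤ dist (g • h • x) (g • x) + dist (g • x) x := by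
        rw [mul_smul]; exact dist_triangle _ _ _
    _ = dist (g • x) x + dist (h • x) x := by rw [dist_smul, add_comm]

end IsometricAction

namespace IsCoarselyBounded

variable {G : Type*} [Monoid G] [TopologicalSpace G] {A B : Set G}

lemma singleton (g : G) : IsCoarselyBounded.{v} {g} := fun X _ _ _ _ x => by
  rw [Set.image_singleton]
  exact isBounded_singleton

lemma mono (hB : IsCoarselyBounded.{v} B) (hAB : A ⊆ B) : IsCoarselyBounded.{v} A :=
  fun X _ _ _ _ x => (hB X x).subset (Set.image_mono hAB)

lemma union (hA : IsCoarselyBounded.{v} A) (hB : IsCoarselyBounded.{v} B) :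
    IsCoarselyBounded.{v} (A ∪ B) := fun X _ _ _ _ x => by
  rw [Set.image_union]
  exact (hA X x).union (hB X x)

lemma mul (hA : IsCoarselyBounded.{v} A) (hB : IsCoarselyBounded.{v} B) :
    IsCoarselyBounded.{v} (A * B) := fun X _ _ _ _ x => by
  obtain ⟨C, hC⟩ := isBounded_smul_image_iff.1 (hA X x)
  obtain ⟨D, hD⟩ := isBounded_smul_image_iff.1 (hB X x)
  refine isBounded_smul_image_iff.2 ⟨C + D, ?_⟩
  rintro _ ⟨a, ha, b, hb, rfl⟩
  exact (dist_mul_smul_le a b x).trans (add_le_add (hC a ha) (hD b hb))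

lemma of_forall_nhds_one (h : ∀ V ∈ 𝓝 (1 : G), ∃ A D : Set G,
    IsCoarselyBounded.{v} A ∧ IsCoarselyBounded.{v} D ∧ B ⊆ A * V * D) :
    IsCoarselyBounded.{v} B := fun X _ _ _ _ x => by
  have hV : {g : G | dist (g • x) x < 1} ∈ 𝓝 1 := by
    have hcont : Continuous fun g : G => dist (g • x) x := by fun_prop
    exact (isOpen_lt hcont continuous_const).mem_nhds (by simp)
  obtain ⟨A, D, hA, hD, hB⟩ := h _ hV
  obtain ⟨a, ha⟩ := isBounded_smul_image_iff.1 (hA X x)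
  obtain ⟨d, hd⟩ := isBounded_smul_image_iff.1 (hD X x)
  refine isBounded_smul_image_iff.2 ⟨a + 1 + d, fun g hg => ?_⟩
  obtain ⟨_, ⟨p, hp, q, hq, rfl⟩, r, hr, rfl⟩ := hB hg
  calc dist ((p * q * r) • x) x
      ≤ dist ((p * q) • x) x + dist (r • x) x := dist_mul_smul_le _ _ _
    _ ≤ dist (p • x) x + dist (q • x) x + dist (r • x) x := by gcongr; exact dist_mul_smul_le _ _ _
    _ ≤ a + 1 + d := add_le_add_three (ha p hp) (le_of_lt hq) (hd r hr)

end IsCoarselyBounded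

section Transvection

variable {ι : Type*} [Fintype ι] [DecidableEq ι] {i j : ι}

lemma diag2n_mul_transvection {F : Type*} [Field F] (hij : i ≠ j) {a : F} (ha : a ≠ 0) (t : F) :
    diag2n hij a ha * transvection hij t = transvection hij (a ^ 2 * t) * diag2n hij a ha := by
  ext k l
  simp only [coe_mul, diag2n_coe, transvection_coe, Matrix.diagonal_mul, Matrix.mul_diagonal,
    Matrix.add_apply, Matrix.one_apply, Matrix.single_apply]
  grind

lemma continuous_transvection {R : Type*} [CommRing R] [TopologicalSpace R] [ContinuousAdd R]
    (hij : i ≠ j) : Continuous (transvection hij : R → Matrix.SpecialLinearGroup ι R) := by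
  refine Continuous.subtype_mk (continuous_matrix fun k l => ?_) _
  simp only [Matrix.transvection, Matrix.add_apply, Matrix.single_apply]
  split_ifs <;> fun_prop

lemma isCoarselyBounded_transvection_image {K : Type*} [NontriviallyNormedField K] (hij : i ≠ j)
    {S : Set K} (hS : IsBounded S) :
    IsCoarselyBounded.{v} (transvection hij '' S : Set (Matrix.SpecialLinearGroup ι K)) := by
  refine .of_forall_nhds_one fun V hV => ?_
  have hV₀ : transvection hij ⁻¹' V ∈ 𝓝 (0 : K) :=
    (continuous_transvection hij).continuousAt (by rwa [transvection_coeff_zero])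
  have hsq : Tendsto (fun a : K => a ^ 2) (cobounded K) (cobounded K) := by
    simpa only [← tendsto_norm_atTop_iff_cobounded, norm_pow, Function.comp_def] using
      (tendsto_pow_atTop two_ne_zero).comp (tendsto_norm_cobounded_atTop (E := K))
  obtain ⟨a, hSa, ha⟩ := ((hsq.eventually ((NormedSpace.isVonNBounded_iff K).2 hS hV₀)).and
    (eventually_ne_cobounded 0)).exists
  refine ⟨{diag2n hij a ha}, {(diag2n hij a ha)⁻¹}, .singleton _, .singleton _, ?_⟩
  rintro _ ⟨_, ht, rfl⟩
  obtain ⟨s, hs, rfl⟩ := hSa ht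
  have hconj : diag2n hij a ha * transvection hij s * (diag2n hij a ha)⁻¹ =
      transvection hij (a ^ 2 • s) := by
    rw [diag2n_mul_transvection, mul_inv_cancel_right, smul_eq_mul]
  exact hconj ▸ Set.mul_mem_mul (Set.mul_mem_mul rfl hs) rfl

end Transvection

lemma eq_transvection_mul_transvection_mul_transvection {F : Type*} [Field F] (g : SL(2, F))
    (hc : g 1 0 ≠ 0) :
    g = transvection zero_ne_one ((g 0 0 - 1) / g 1 0) * transvection one_ne_zero (g 1 0) *
      transvection zero_ne_one ((g 1 1 - 1) / g 1 0) := by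
  have hdet : g 0 0 * g 1 1 - g 0 1 * g 1 0 = 1 := by rw [← Matrix.det_fin_two, det_coe]
  ext i j
  fin_cases i <;> fin_cases j <;>
    simp [transvection_coe, Matrix.mul_apply, Matrix.one_apply] <;> grind

lemma exists_one_le_mul_norm_apply_zero {K : Type*} [NormedField K] {g : SL(2, K)} {M : ℝ}
    (hg : ∀ i j, ‖g i j‖ ≤ M) : ∃ i, 1 ≤ 2 * M * ‖g i 0‖ := by
  have hdet : g 0 0 * g 1 1 - g 0 1 * g 1 0 = 1 := by rw [← Matrix.det_fin_two, det_coe]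
  have hsum : 1 ≤ ‖g 0 0‖ * M + M * ‖g 1 0‖ :=
    calc 1 = ‖g 0 0 * g 1 1 - g 0 1 * g 1 0‖ := by rw [hdet, norm_one]
      _ ≤ ‖g 0 0‖ * ‖g 1 1‖ + ‖g 0 1‖ * ‖g 1 0‖ := by
        simpa only [norm_mul] using norm_sub_le (g 0 0 * g 1 1) (g 0 1 * g 1 0)
      _ ≤ ‖g 0 0‖ * M + M * ‖g 1 0‖ := by gcongr <;> exact hg _ _
  by_contra! h
  linarith [h 0, h 1]

lemma isCoarselyBounded_of_one_le_mul_norm_apply_one_zero {K : Type*} [NontriviallyNormedField K]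
    {B : Set SL(2, K)} {M r : ℝ} (hB : ∀ g ∈ B, ∀ i j, ‖g i j‖ ≤ M)
    (hr : ∀ g ∈ B, 1 ≤ r * ‖g 1 0‖) : IsCoarselyBounded.{v} B := by
  -- `sl2TopologicalSpace` is by definition the subspace topology that Mathlib puts on `SL ι K`.
  have hbdd (i j : Fin 2) (hij : i ≠ j) (R : ℝ) : IsCoarselyBounded.{v}
      (transvection hij '' Metric.closedBall 0 R : Set SL(2, K)) :=
    isCoarselyBounded_transvection_image hij Metric.isBounded_closedBall
  refine (((hbdd 0 1 zero_ne_one ((M + 1) * r)).mul (hbdd 1 0 one_ne_zero M)).mul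
    (hbdd 0 1 zero_ne_one ((M + 1) * r))).mono fun g hg => ?_
  have hc : g 1 0 ≠ 0 := fun h => by simpa [h] using (hr g hg).trans_lt' zero_lt_one
  have hdiag (i : Fin 2) : (g i i - 1) / g 1 0 ∈ Metric.closedBall 0 ((M + 1) * r) := by
    have hsub : ‖g i i - 1‖ ≤ M + 1 :=
      (norm_sub_le _ _).trans (by rw [norm_one]; gcongr; exact hB g hg i i)
    rw [mem_closedBall_zero_iff, norm_div, div_le_iff₀ (norm_pos_iff.2 hc), mul_assoc]
    exact hsub.trans (le_mul_of_one_le_right ((norm_nonneg _).trans hsub) (hr g hg))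
  rw [eq_transvection_mul_transvection_mul_transvection g hc]
  exact Set.mul_mem_mul (Set.mul_mem_mul (Set.mem_image_of_mem _ (hdiag 0))
    (Set.mem_image_of_mem _ (mem_closedBall_zero_iff.2 (hB g hg 1 0))))
    (Set.mem_image_of_mem _ (hdiag 1))

lemma coe_modularGroupS_mul {R : Type*} [CommRing R] (g : SL(2, R)) :
    ((ModularGroup.S * g : SL(2, R)) : Matrix (Fin 2) (Fin 2) R) =
      !![-g 1 0, -g 1 1; g 0 0, g 0 1] := by
  ext i j
  fin_cases i <;> fin_cases j <;> simp [Matrix.mul_apply]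

theorem normBounded_coarselyBounded_SL2_general {K : Type*} [NontriviallyNormedField K]
    {B : Set SL(2, K)} {M : ℝ} (hB : ∀ g ∈ B, ∀ i j, ‖g i j‖ ≤ M) :
    IsCoarselyBounded.{v} B := by
  let S : SL(2, K) := ModularGroup.S
  let A : Set SL(2, K) := {g | (∀ i j, ‖g i j‖ ≤ M) ∧ 1 ≤ 2 * M * ‖g 1 0‖}
  have hA : IsCoarselyBounded.{v} A :=
    isCoarselyBounded_of_one_le_mul_norm_apply_one_zero (fun _ hg => hg.1) fun _ hg => hg.2
  refine (((IsCoarselyBounded.singleton S⁻¹).mul hA).union hA).mono fun g hg => ?_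
  refine (Fin.exists_fin_two.1 (exists_one_le_mul_norm_apply_zero (hB g hg))).imp
    (fun ha => ?_) fun hc => ⟨hB g hg, hc⟩
  have hSg : S * g ∈ A := by
    simp only [A, S, Set.mem_ofPred_eq, coe_modularGroupS_mul]
    simpa [Fin.forall_fin_two, hB g hg] using ha
  exact ⟨S⁻¹, rfl, S * g, hSg, inv_mul_cancel_left S g⟩

/-- Let `K` be a field with a complete, non-trivial, non-Archimedean absolute value.
Every norm-bounded subset `B` of `SL₂(K)` is coarsely bounded: for every metric space
`X` on which `SL₂(K)` acts continuously by isometries and every `x ∈ X`, the orbit set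
`{g • x : g ∈ B}` is bounded. -/
theorem normBounded_coarselyBounded_SL2 {K : Type*} [NormedField K] [CompleteSpace K]
    (hna : ∀ x y : K, ‖x + y‖ ≤ max ‖x‖ ‖y‖)
    (hnt : ∃ x : K, x ≠ 0 ∧ ‖x‖ ≠ 1)
    (B : Set (Matrix.SpecialLinearGroup (Fin 2) K))
    (M : ℝ) (hM : 0 ≤ M)
    (hB : ∀ g ∈ B, ∀ i j : Fin 2, ‖(g : Matrix (Fin 2) (Fin 2) K) i j‖ ≤ M)
    (X : Type*) [MetricSpace X] [MulAction (Matrix.SpecialLinearGroup (Fin 2) K) X]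
    (hiso : ∀ g : Matrix.SpecialLinearGroup (Fin 2) K, Isometry fun x : X => g • x)
    (hcont : Continuous fun p : Matrix.SpecialLinearGroup (Fin 2) K × X => p.1 • p.2)
    (x : X) :
    Bornology.IsBounded ((fun g : Matrix.SpecialLinearGroup (Fin 2) K => g • x) '' B) := by
  let _ : NontriviallyNormedField K := .ofNormNeOne hnt
  have : IsIsometricSMul (Matrix.SpecialLinearGroup (Fin 2) K) X := ⟨hiso⟩
  have : ContinuousSMul (Matrix.SpecialLinearGroup (Fin 2) K) X := ⟨hcont⟩
  exact normBounded_coarselyBounded_SL2_general hB X x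
end
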